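/- For every fixed ε > 0 there exists a constant C₀ > 0 such that for every β ∈ [1,2), G(β) ≥ −log₂(5/4) + C₀·|β − 5/4|^{2+ε}. In particular, G(β) > −log₂(5/4) whenever β ≠ 5/4. -/

import Mathlib

/-- The binary entropy function, `h(p) = p log₂(1/p) + (1-p) log₂(1/(1-p))`,
with the convention `h(0) = h(1) = 0` (automatic since `1/0 = 0` and `logb 2 0 = 0`). -/
noncomputable def binH (p : ℝ) : ℝ :=
  p * Real.logb 2 (1 / p) + (1 - p) * Real.logb 2 (1 / (1 - p))

/-- `(c, b) ∈ C(β)`: `c : ℕ → [0,1]`, `∑ cᵢ/2ⁱ = 1/(β·2ᵇ)` and `∑ cᵢ ≤ 1`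
(the latter expressed via partial sums, which is equivalent for nonnegative terms). -/
def memC (β : ℝ) (c : ℕ → ℝ) (b : ℕ) : Prop :=
  (∀ i, c i ∈ Set.Icc (0 : ℝ) 1) ∧
  (∑' i : ℕ, c i / 2 ^ i) = 1 / (β * 2 ^ b) ∧
  ∀ n : ℕ, (∑ i ∈ Finset.range n, c i) ≤ 1

/-- `α ∈ A(c,b)`: `α : ℕ → [0,1]` with `∑ αᵢ cᵢ / 2ⁱ = 1/(β·2^{b+1})`. -/
def memA (β : ℝ) (b : ℕ) (c α : ℕ → ℝ) : Prop :=
  (∀ i, α i ∈ Set.Icc (0 : ℝ) 1) ∧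
  (∑' i : ℕ, α i * c i / 2 ^ i) = 1 / (β * 2 ^ (b + 1))

/-- `P(c,α) = ∑ h(αᵢ)·cᵢ − h(∑ αᵢ·cᵢ)`. -/
noncomputable def Pfun (c α : ℕ → ℝ) : ℝ :=
  (∑' i : ℕ, binH (α i) * c i) - binH (∑' i : ℕ, α i * c i)

/-- `sup_{α ∈ A(c,b)} P(c,α)`. -/
noncomputable def supP (β : ℝ) (b : ℕ) (c : ℕ → ℝ) : ℝ :=
  sSup {y | ∃ α, memA β b c α ∧ y = Pfun c α}

/-- `G(β) = inf_{(c,b) ∈ C(β)} sup_{α ∈ A(c,b)} P(c,α)`. -/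
noncomputable def Gfun (β : ℝ) : ℝ :=
  sInf {y | ∃ c b, memC β c b ∧ y = supP β b c}

/-!
Put `α = 1/2 + δ` with `∑ δᵢcᵢ/2ⁱ = 0`, and let `S = ∑ cᵢ`. The tangent to `h` at `1/5` has slope
`2` and gives `h(p) ≤ 2p + log₂(5/4) - (p - 1/5)²`, whereas `h(1/2 + d) ≥ 1 - 6d²`. Hence
`P(c,α) ≥ -log₂(5/4) - 2∑ δᵢcᵢ - 6∑ δᵢ²cᵢ + (∑ αᵢcᵢ - 1/5)²`.
For `δ = 0` the bound exceeds `-log₂(5/4)` unless `S = 2/5`. If `c` charges both the indices `≤ k`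
and the indices `> k`, raising `α` on the former and lowering it on the latter makes `-∑ δᵢcᵢ`
positive to first order. Choose `k` with `S/2 ≤ X ≤ S`, where `X = 2ᵏ∑ cᵢ/2ⁱ`: the gain is at
least a multiple of `(S - X)(X - S/2)`. Since `Xβ` is a power of `2`, having both
`(S - X)(X - S/2)` and `(S - 2/5)²` small forces `X ≈ 2/5` with `Xβ = 1/2`, or `X ≈ 1/5` with
`Xβ = 1/4`; either way `β ≈ 5/4`, with a quadratic rate.
-/

open Real Set

lemma abs_rpow_le_sq {x s : ℝ} (hx : |x| ≤ 1) (hs : 2 ≤ s) : |x| ^ s ≤ x ^ 2 := by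
  rw [← sq_abs, ← rpow_two]
  exact rpow_le_rpow_of_exponent_ge' (abs_nonneg x) hx zero_le_two hs

lemma negMulLog_le_neg_mul_log_add_sub_sq_div {p q : ℝ} (hp : 0 ≤ p) (hq : 0 < q) :
    negMulLog p ≤ -p * log q + (q - p) - (p - q) ^ 2 / (2 * (p + q)) := by
  rcases hp.eq_or_lt with rfl | hp
  · have : (0 - q) ^ 2 / (2 * (0 + q)) = q / 2 := by field_simp; ring
    rw [negMulLog_zero, this]
    linarith
  -- Applying `log x ≤ x - 1` on both legs of the path `p → (p + q) / 2 → q` leaves a gap.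
  have hm : 0 < (p + q) / 2 := by positivity
  have h_to_q := log_le_sub_one_of_pos (div_pos hq hm)
  have h_from_p := log_le_sub_one_of_pos (div_pos hm hp)
  rw [log_div (by positivity) (by positivity)] at h_to_q h_from_p
  calc
    negMulLog p = -p * log q + p * (log q - log p) := by rw [negMulLog]; ring
    _ ≤ -p * log q + p * ((q / ((p + q) / 2) - 1) + ((p + q) / 2 / p - 1)) := by
        gcongr; linarith
    _ = -p * log q + (q - p) - (p - q) ^ 2 / (2 * (p + q)) := by field_simp; ring

lemma neg_mul_log_add_le_negMulLog {p q : ℝ} (hp : 0 ≤ p) (hq : 0 < q) :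
    -p * log q + p * (1 - p / q) ≤ negMulLog p := by
  rcases hp.eq_or_lt with rfl | hp
  · simp
  have h := log_le_sub_one_of_pos (div_pos hp hq)
  rw [log_div hp.ne' hq.ne'] at h
  rw [negMulLog]
  linarith [mul_le_mul_of_nonneg_left h hp.le]

/-- The cross entropy, in nats, of Bernoulli distributions with parameters `p` and `q`: the value
at `p` of the tangent to `Real.binEntropy` at `q`. -/
noncomputable def binCrossEntropy (p q : ℝ) : ℝ := -p * log q - (1 - p) * log (1 - q)

lemma binEntropy_le_binCrossEntropy_sub_sq {p q : ℝ} (hp : p ∈ Icc 0 1) (hq : q ∈ Ioo 0 1) :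
    binEntropy p ≤ binCrossEntropy p q - (p - q) ^ 2 := by
  have h₁ := negMulLog_le_neg_mul_log_add_sub_sq_div hp.1 hq.1
  have h₂ := negMulLog_le_neg_mul_log_add_sub_sq_div (sub_nonneg.2 hp.2) (sub_pos.2 hq.2)
  have hs : 0 < p + q := by linarith [hp.1, hq.1]
  have ht : 0 < 1 - p + (1 - q) := by linarith [hp.2, hq.2]
  have hgap : (p - q) ^ 2 ≤
      (p - q) ^ 2 / (2 * (p + q)) + (1 - p - (1 - q)) ^ 2 / (2 * (1 - p + (1 - q))) := by
    have heq : (p - q) ^ 2 / (2 * (p + q)) + (1 - p - (1 - q)) ^ 2 / (2 * (1 - p + (1 - q)))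
        = (p - q) ^ 2 / ((p + q) * (1 - p + (1 - q))) := by field_simp; ring
    rw [heq]
    exact le_div_self (sq_nonneg _) (by positivity) (by nlinarith [sq_nonneg (p + q - 1)])
  rw [binEntropy_eq_negMulLog_add_negMulLog_one_sub, binCrossEntropy]
  linarith

lemma binCrossEntropy_sub_sq_div_le_binEntropy {p q : ℝ} (hp : p ∈ Icc 0 1) (hq : q ∈ Ioo 0 1) :
    binCrossEntropy p q - (p - q) ^ 2 / (q * (1 - q)) ≤ binEntropy p := by
  have hq₁ : 0 < 1 - q := sub_pos.2 hq.2
  have hq₀ : 0 < q := hq.1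
  have h₁ := neg_mul_log_add_le_negMulLog hp.1 hq₀
  have h₂ := neg_mul_log_add_le_negMulLog (sub_nonneg.2 hp.2) hq₁
  have heq : p * (1 - p / q) + (1 - p) * (1 - (1 - p) / (1 - q)) =
      -((p - q) ^ 2 / (q * (1 - q))) := by field_simp; ring
  rw [binEntropy_eq_negMulLog_add_negMulLog_one_sub, binCrossEntropy]
  linarith

lemma binH_eq_binEntropy_div_log_two (p : ℝ) : binH p = binEntropy p / log 2 := by
  simp only [binH, logb, binEntropy, one_div]
  ring

lemma binH_mem_Icc {p : ℝ} (hp : p ∈ Icc 0 1) : binH p ∈ Icc 0 1 := by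
  have hlog := log_pos one_lt_two
  rw [binH_eq_binEntropy_div_log_two]
  exact ⟨div_nonneg (binEntropy_nonneg hp.1 hp.2) hlog.le,
    (div_le_one hlog).2 binEntropy_le_log_two⟩

lemma binH_le_tangent_sub_sq {p : ℝ} (hp : p ∈ Icc 0 1) :
    binH p ≤ 2 * p + logb 2 (5 / 4) - (p - 1 / 5) ^ 2 := by
  have hlog := log_pos one_lt_two
  have h := binEntropy_le_binCrossEntropy_sub_sq hp (q := 1 / 5) (by norm_num)
  have h_fifth : log (1 / 5) = -log (5 / 4) - 2 * log 2 := by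
    rw [show (1 / 5 : ℝ) = (5 / 4)⁻¹ / 2 ^ 2 by norm_num, log_div (by norm_num) (by norm_num),
      log_inv, log_pow]
    norm_num
  have h_four_fifths : log (1 - 1 / 5) = -log (5 / 4) := by
    rw [← log_inv]
    norm_num
  have h_scale : (p - 1 / 5) ^ 2 * log 2 ≤ (p - 1 / 5) ^ 2 :=
    mul_le_of_le_one_right (sq_nonneg _) (by linarith [log_two_lt_d9])
  rw [binCrossEntropy, h_fifth, h_four_fifths] at h
  rw [binH_eq_binEntropy_div_log_two, div_le_iff₀ hlog, sub_mul, add_mul, logb,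
    div_mul_cancel₀ _ hlog.ne']
  linarith

lemma one_sub_sq_le_binH {p : ℝ} (hp : p ∈ Icc 0 1) : 1 - 6 * (p - 1 / 2) ^ 2 ≤ binH p := by
  have h := binCrossEntropy_sub_sq_div_le_binEntropy hp (q := 1 / 2) (by norm_num)
  have h_half : log (1 / 2) = -log 2 := by rw [one_div, log_inv]
  have h_scale : (p - 1 / 2) ^ 2 * (2 / 3) ≤ (p - 1 / 2) ^ 2 * log 2 := by
    gcongr
    linarith [log_two_gt_d9]
  rw [binCrossEntropy, show (1 - 1 / 2 : ℝ) = 1 / 2 by norm_num, h_half] at h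
  norm_num at h h_scale
  rw [binH_eq_binEntropy_div_log_two, le_div_iff₀ (log_pos one_lt_two)]
  linarith

section WeightedSums

variable {ι : Type*} {c f : ι → ℝ}

lemma summable_mul_of_abs_le_one (hc : Summable c) (hc₀ : ∀ i, 0 ≤ c i) (hf : ∀ i, |f i| ≤ 1) :
    Summable fun i => f i * c i :=
  .of_norm_bounded hc fun i => by
    rw [norm_mul, norm_of_nonneg (hc₀ i)]
    exact mul_le_of_le_one_left (hc₀ i) (hf i)

lemma summable_mul_of_mem_Icc (hc : Summable c) (hc₀ : ∀ i, 0 ≤ c i)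
    (hf : ∀ i, f i ∈ Icc 0 1) : Summable fun i => f i * c i :=
  summable_mul_of_abs_le_one hc hc₀ fun i => by
    rw [abs_of_nonneg (hf i).1]
    exact (hf i).2

lemma tsum_mul_mem_Icc (hc : Summable c) (hc₀ : ∀ i, 0 ≤ c i) (hf : ∀ i, f i ∈ Icc 0 1) :
    ∑' i, f i * c i ∈ Icc 0 (∑' i, c i) :=
  ⟨tsum_nonneg fun i => mul_nonneg (hf i).1 (hc₀ i),
    (summable_mul_of_mem_Icc hc hc₀ hf).tsum_le_tsum
      (fun i => mul_le_of_le_one_left (hc₀ i) (hf i).2) hc⟩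

lemma tsum_comp_piecewise_mul (s : Set ι) [DecidablePred (· ∈ s)] (hc : Summable c)
    (F : ℝ → ℝ) (x y : ℝ) :
    ∑' i, F (s.piecewise (fun _ => x) (fun _ => y) i) * c i =
      F x * ∑' i : s, c i + F y * ∑' i : (sᶜ : Set ι), c i := by
  refine (HasSum.add_compl (s := s) ?_ ?_).tsum_eq
  · refine ((hc.subtype s).hasSum.mul_left (F x)).congr_fun fun i => ?_
    simp
  · refine ((hc.subtype sᶜ).hasSum.mul_left (F y)).congr_fun fun i => ?_
    simp [show (i : ι) ∉ s from i.2]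

end WeightedSums

section DyadicScales

variable {c : ℕ → ℝ}

lemma div_two_pow_le {x : ℝ} (hx : 0 ≤ x) (i : ℕ) : x / 2 ^ i ≤ x :=
  div_le_self hx (one_le_pow₀ one_le_two)

lemma summable_div_two_pow (hc : Summable c) (hc₀ : ∀ i, 0 ≤ c i) :
    Summable fun i => c i / 2 ^ i :=
  hc.of_nonneg_of_le (fun i => div_nonneg (hc₀ i) (by positivity)) fun i => div_two_pow_le (hc₀ i) i

lemma tsum_Iic_le_two_pow_mul (hc : Summable c) (hc₀ : ∀ i, 0 ≤ c i) (k : ℕ) :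
    ∑' i : Iic k, c i ≤ 2 ^ k * ∑' i : Iic k, c i / 2 ^ (i : ℕ) := by
  rw [← tsum_mul_left]
  refine (hc.subtype _).tsum_le_tsum (fun i => ?_)
    (((summable_div_two_pow hc hc₀).subtype _).mul_left _)
  have hi : (i : ℕ) ≤ k := i.2
  rw [mul_div_assoc', le_div_iff₀ (by positivity), mul_comm]
  exact mul_le_mul_of_nonneg_right (pow_le_pow_right₀ one_le_two hi) (hc₀ i)

lemma two_pow_mul_le_tsum_compl_Iic (hc : Summable c) (hc₀ : ∀ i, 0 ≤ c i) (k : ℕ) :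
    2 ^ (k + 1) * ∑' i : ((Iic k)ᶜ : Set ℕ), c i / 2 ^ (i : ℕ) ≤
      ∑' i : ((Iic k)ᶜ : Set ℕ), c i := by
  rw [← tsum_mul_left]
  refine (((summable_div_two_pow hc hc₀).subtype _).mul_left _).tsum_le_tsum (fun i => ?_)
    (hc.subtype _)
  have hi : k + 1 ≤ i := notMem_Iic.1 i.2
  rw [mul_div_assoc', div_le_iff₀ (by positivity), mul_comm (c i)]
  exact mul_le_mul_of_nonneg_right (pow_le_pow_right₀ one_le_two hi) (hc₀ i)

lemma exists_two_pow_mul_mem_Icc {x y : ℝ} (hx : 0 < x) (hxy : x ≤ y) :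
    ∃ k : ℕ, 2 ^ k * x ∈ Icc (y / 2) y := by
  obtain ⟨k, hk, hk'⟩ := exists_nat_pow_near ((one_le_div hx).2 hxy) one_lt_two
  rw [le_div_iff₀ hx] at hk
  rw [div_lt_iff₀ hx, pow_succ] at hk'
  exact ⟨k, by linarith, hk⟩

end DyadicScales

namespace memC

variable {β : ℝ} {c : ℕ → ℝ} {b : ℕ}

lemma nonneg (h : memC β c b) (i : ℕ) : 0 ≤ c i := (h.1 i).1

lemma summable (h : memC β c b) : Summable c := summable_of_sum_range_le h.nonneg h.2.2

lemma tsum_le_one (h : memC β c b) : ∑' i, c i ≤ 1 := tsum_le_of_sum_range_le h.nonneg h.2.2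

lemma tsum_mul_mem_Icc (h : memC β c b) {f : ℕ → ℝ} (hf : ∀ i, f i ∈ Icc 0 1) :
    ∑' i, f i * c i ∈ Icc 0 1 :=
  Icc_subset_Icc_right h.tsum_le_one (_root_.tsum_mul_mem_Icc h.summable h.nonneg hf)

lemma Pfun_le_one (h : memC β c b) {α : ℕ → ℝ} (hα : ∀ i, α i ∈ Icc 0 1) : Pfun c α ≤ 1 := by
  have h_first := (h.tsum_mul_mem_Icc fun i => binH_mem_Icc (hα i)).2
  have h_second := (binH_mem_Icc (h.tsum_mul_mem_Icc hα)).1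
  rw [Pfun]
  linarith

lemma Pfun_le_supP (h : memC β c b) {α : ℕ → ℝ} (hα : memA β b c α) : Pfun c α ≤ supP β b c := by
  refine le_csSup ⟨1, ?_⟩ ⟨α, hα, rfl⟩
  rintro _ ⟨α', hα', rfl⟩
  exact h.Pfun_le_one hα'.1

lemma quadratic_le_Pfun (h : memC β c b) {α : ℕ → ℝ} (hα : ∀ i, α i ∈ Icc 0 1) :
    -logb 2 (5 / 4) + ∑' i, (1 - 6 * (α i - 1 / 2) ^ 2) * c i - 2 * ∑' i, α i * c i
      + (∑' i, α i * c i - 1 / 5) ^ 2 ≤ Pfun c α := by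
  have h_abs (i : ℕ) : |1 - 6 * (α i - 1 / 2) ^ 2| ≤ 1 := by
    have := hα i
    exact abs_le.2 ⟨by nlinarith [this.1, this.2], by nlinarith⟩
  have h_first : ∑' i, (1 - 6 * (α i - 1 / 2) ^ 2) * c i ≤ ∑' i, binH (α i) * c i :=
    (summable_mul_of_abs_le_one h.summable h.nonneg h_abs).tsum_le_tsum
      (fun i => mul_le_mul_of_nonneg_right (one_sub_sq_le_binH (hα i)) (h.nonneg i))
      (summable_mul_of_mem_Icc h.summable h.nonneg fun i => binH_mem_Icc (hα i))
  have h_second := binH_le_tangent_sub_sq (h.tsum_mul_mem_Icc hα)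
  rw [Pfun]
  linarith

end memC

lemma memC_single {β : ℝ} (hβ : 1 ≤ β) : memC β (Pi.single 0 (1 / β)) 0 := by
  have h_mem : 1 / β ∈ Icc (0 : ℝ) 1 := ⟨by positivity, (div_le_one (by positivity)).2 hβ⟩
  refine ⟨fun i => ?_, ?_, fun n => ?_⟩
  · rcases eq_or_ne i 0 with rfl | hi
    · simpa only [Pi.single_eq_same] using h_mem
    · simp [hi]
  · rw [tsum_eq_single 0 fun i hi => by simp [hi]]
    simp
  · calc ∑ i ∈ Finset.range n, Pi.single 0 (1 / β) i
        = if 0 ∈ Finset.range n then 1 / β else 0 := by simp [Pi.single_apply]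
      _ ≤ 1 := by split_ifs; exacts [h_mem.2, zero_le_one]

section TwoScales

variable {A B X u v : ℝ}

lemma two_scale_cross_le (hu : 0 ≤ u) (hv : 0 ≤ v) (hA : A ≤ X * u) (hB : 2 * (X * v) ≤ B) :
    A * v ≤ B * u / 2 := by
  linarith [mul_le_mul_of_nonneg_right hA hv, mul_le_mul_of_nonneg_right hB hu]

lemma two_scale_gain (hA : 0 ≤ A) (hB : 0 ≤ B) (hAB : A + B ≤ 1) (hu : 0 ≤ u) (hv : 0 ≤ v)
    (huv : u + v = 1) (hcross : A * v ≤ B * u / 2) :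
    (B * u + ((A + B) / 2 - 1 / 5) ^ 2) / 30 ≤
      (1 - 6 * (v / 12) ^ 2) * A + (1 - 6 * (u / 12) ^ 2) * B
        - 2 * ((1 / 2 + v / 12) * A + (1 / 2 - u / 12) * B)
        + ((1 / 2 + v / 12) * A + (1 / 2 - u / 12) * B - 1 / 5) ^ 2 := by
  have hBu : 0 ≤ B * u := mul_nonneg hB hu
  have hAv : 0 ≤ A * v := mul_nonneg hA hv
  obtain ⟨D, hD⟩ : ∃ D, D = (B * u - A * v) / 12 := ⟨_, rfl⟩
  have h_mean : (1 / 2 + v / 12) * A + (1 / 2 - u / 12) * B = (A + B) / 2 - D := by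
    rw [hD]
    ring
  have h_cost : A * v ^ 2 + B * u ^ 2 ≤ B * u :=
    calc
      A * v ^ 2 + B * u ^ 2 = A * v * v + B * u * u := by ring
      _ ≤ B * u * v + B * u * u := by
        linarith [mul_le_mul_of_nonneg_right (show A * v ≤ B * u by linarith) hv]
      _ = B * u := by rw [← mul_add, add_comm v, huv, mul_one]
  have hBu_le : B * u ≤ 1 := mul_le_one₀ (by linarith) hu (by linarith)
  have hD_sq : D ^ 2 ≤ D / 12 := by
    linarith [mul_le_mul_of_nonneg_left (show D ≤ 1 / 12 by linarith) (show 0 ≤ D by linarith)]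
  rw [h_mean]
  linarith [sq_nonneg ((A + B) / 2 - 1 / 5 - 2 * D), sq_nonneg ((A + B) / 2 - 1 / 5)]

lemma two_scale_gap_le (hA₀ : 0 ≤ A) (hB₀ : 0 ≤ B) (hAB : A + B ≤ 1) (hu : 0 ≤ u) (hv : 0 ≤ v)
    (huv : u + v = 1) (hA : A ≤ X * u) (hB : 2 * (X * v) ≤ B)
    (hX : X ∈ Icc ((A + B) / 2) (A + B)) :
    (A + B - X) * (X - (A + B) / 2) ≤ B * u := by
  have hXuv : X * u + X * v = X := by rw [← mul_add, huv, mul_one]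
  have hX₀ : 0 ≤ X := by linarith [hX.1]
  have h_left : A + B - X ≤ B := by linarith [mul_nonneg hX₀ hv]
  have h_right : X - (A + B) / 2 ≤ u := by
    linarith [mul_le_of_le_one_left hu (hX.2.trans hAB)]
  exact mul_le_mul h_left h_right (by linarith [hX.1]) hB₀

end TwoScales

section TwoScaleSeq

open Classical in
/-- The competitor `α` in `A(c, b)`: the constant sequence `1/2`, raised on `s` and lowered off `s`.
When `u` and `v` are the fractions of `∑ cᵢ/2ⁱ` carried by `s` and `sᶜ`, the two changes cancel in
`∑ αᵢcᵢ/2ⁱ`. The step `1/12` maximizes `t - 6t²`, the balance of first-order gain and entropy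
loss. -/
noncomputable def twoScaleSeq (s : Set ℕ) (u v : ℝ) : ℕ → ℝ :=
  s.piecewise (fun _ => 1 / 2 + v / 12) (fun _ => 1 / 2 - u / 12)

variable {s : Set ℕ} {u v : ℝ}

lemma tsum_comp_twoScaleSeq_mul {c : ℕ → ℝ} (hc : Summable c) (F : ℝ → ℝ) :
    ∑' i, F (twoScaleSeq s u v i) * c i =
      F (1 / 2 + v / 12) * ∑' i : s, c i + F (1 / 2 - u / 12) * ∑' i : (sᶜ : Set ℕ), c i := by
  classical
  exact tsum_comp_piecewise_mul s hc F _ _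

lemma twoScaleSeq_mem_Icc (hu : u ∈ Icc 0 1) (hv : v ∈ Icc 0 1) (i : ℕ) :
    twoScaleSeq s u v i ∈ Icc 0 1 := by
  obtain ⟨hu₀, hu₁⟩ := hu
  obtain ⟨hv₀, hv₁⟩ := hv
  rw [twoScaleSeq, Set.piecewise]
  split_ifs <;> constructor <;> linarith

lemma memC.memA_twoScaleSeq {β : ℝ} {c : ℕ → ℝ} {b : ℕ} (h : memC β c b) (hu : 0 ≤ u)
    (hv : 0 ≤ v) (huv : u + v = 1) (hs : ∑' i : s, c i / 2 ^ (i : ℕ) = 1 / (β * 2 ^ b) * u)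
    (hsc : ∑' i : (sᶜ : Set ℕ), c i / 2 ^ (i : ℕ) = 1 / (β * 2 ^ b) * v) :
    memA β b c (twoScaleSeq s u v) := by
  refine ⟨twoScaleSeq_mem_Icc ⟨hu, by linarith⟩ ⟨hv, by linarith⟩, ?_⟩
  have hw := summable_div_two_pow h.summable h.nonneg
  calc
    ∑' i, twoScaleSeq s u v i * c i / 2 ^ i = ∑' i, twoScaleSeq s u v i * (c i / 2 ^ i) := by
      simp only [mul_div_assoc]
    _ = (1 / 2 + v / 12) * (1 / (β * 2 ^ b) * u) + (1 / 2 - u / 12) * (1 / (β * 2 ^ b) * v) := by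
      rw [tsum_comp_twoScaleSeq_mul hw fun x => x, hs, hsc]
    _ = 1 / (β * 2 ^ b) * (u + v) / 2 := by ring
    _ = 1 / (β * 2 ^ (b + 1)) := by rw [huv, pow_succ, mul_one, div_div, mul_assoc]

end TwoScaleSeq

section LowerBound

variable {β : ℝ} {c : ℕ → ℝ} {b : ℕ}

lemma memC.gain_le_Pfun_twoScaleSeq {s : Set ℕ} {u v : ℝ} (h : memC β c b)
    (hu : 0 ≤ u) (hv : 0 ≤ v) (huv : u + v = 1)
    (hcross : (∑' i : s, c i) * v ≤ (∑' i : (sᶜ : Set ℕ), c i) * u / 2) :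
    -logb 2 (5 / 4) +
        ((∑' i : (sᶜ : Set ℕ), c i) * u + ((∑' i, c i) / 2 - 1 / 5) ^ 2) / 30 ≤
      Pfun c (twoScaleSeq s u v) := by
  have h_le := h.quadratic_le_Pfun
    (twoScaleSeq_mem_Icc (s := s) (u := u) (v := v) ⟨hu, by linarith⟩ ⟨hv, by linarith⟩)
  have hS := h.summable.tsum_subtype_add_tsum_subtype_compl s
  have h_gain := two_scale_gain (tsum_nonneg fun i : s => h.nonneg i)
    (tsum_nonneg fun i : (sᶜ : Set ℕ) => h.nonneg i) (hS.trans_le h.tsum_le_one) hu hv huv hcross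
  rw [tsum_comp_twoScaleSeq_mul h.summable fun x => 1 - 6 * (x - 1 / 2) ^ 2,
    tsum_comp_twoScaleSeq_mul h.summable fun x => x] at h_le
  rw [hS] at h_gain
  linarith

lemma memC.gap_le_supP {k : ℕ} (h : memC β c b) (hβ : 0 < β)
    (hk : 2 ^ k * (1 / (β * 2 ^ b)) ∈ Icc ((∑' i, c i) / 2) (∑' i, c i)) :
    -logb 2 (5 / 4) + ((∑' i, c i - 2 ^ k * (1 / (β * 2 ^ b)))
        * (2 ^ k * (1 / (β * 2 ^ b)) - (∑' i, c i) / 2) + ((∑' i, c i) / 2 - 1 / 5) ^ 2) / 30 ≤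
      supP β b c := by
  obtain ⟨W, hW⟩ : ∃ W, W = 1 / (β * 2 ^ b) := ⟨_, rfl⟩
  obtain ⟨u, hu⟩ : ∃ u, u = (∑' i : Iic k, c i / 2 ^ (i : ℕ)) / W := ⟨_, rfl⟩
  obtain ⟨v, hv⟩ : ∃ v, v = (∑' i : ((Iic k)ᶜ : Set ℕ), c i / 2 ^ (i : ℕ)) / W := ⟨_, rfl⟩
  have hW₀ : 0 < W := by rw [hW]; positivity
  have hw₀ (i : ℕ) : 0 ≤ c i / 2 ^ i := div_nonneg (h.nonneg i) (by positivity)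
  have hu₀ : 0 ≤ u := hu ▸ div_nonneg (tsum_nonneg fun i => hw₀ i) hW₀.le
  have hv₀ : 0 ≤ v := hv ▸ div_nonneg (tsum_nonneg fun i => hw₀ i) hW₀.le
  have hWu : ∑' i : Iic k, c i / 2 ^ (i : ℕ) = W * u := by rw [hu, mul_div_cancel₀ _ hW₀.ne']
  have hWv : ∑' i : ((Iic k)ᶜ : Set ℕ), c i / 2 ^ (i : ℕ) = W * v := by
    rw [hv, mul_div_cancel₀ _ hW₀.ne']
  have hw := summable_div_two_pow h.summable h.nonneg
  have huv : u + v = 1 := by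
    rw [hu, hv, ← add_div, hw.tsum_subtype_add_tsum_subtype_compl (Iic k), h.2.1, ← hW,
      div_self hW₀.ne']
  have hS := h.summable.tsum_subtype_add_tsum_subtype_compl (Iic k)
  have hA : ∑' i : Iic k, c i ≤ 2 ^ k * W * u := by
    rw [mul_assoc, ← hWu]
    exact tsum_Iic_le_two_pow_mul h.summable h.nonneg k
  have hB : 2 * (2 ^ k * W * v) ≤ ∑' i : ((Iic k)ᶜ : Set ℕ), c i := by
    rw [mul_assoc, ← hWv, ← mul_assoc, ← pow_succ']
    exact two_pow_mul_le_tsum_compl_Iic h.summable h.nonneg k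
  have h_gap := two_scale_gap_le (tsum_nonneg fun i : Iic k => h.nonneg i)
    (tsum_nonneg fun i : ((Iic k)ᶜ : Set ℕ) => h.nonneg i) (hS.trans_le h.tsum_le_one)
    hu₀ hv₀ huv hA hB (by rwa [hS, hW])
  have h_gain := h.gain_le_Pfun_twoScaleSeq hu₀ hv₀ huv (two_scale_cross_le hu₀ hv₀ hA hB)
  have h_le := h.Pfun_le_supP (h.memA_twoScaleSeq hu₀ hv₀ huv (hW ▸ hWu) (hW ▸ hWv))
  rw [hS] at h_gap
  rw [← hW]
  linarith

end LowerBound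

section Gap

variable {β S X : ℝ}

lemma sq_sub_le_gap_of_mul_eq_half (hβ : β ∈ Ioc 0 2) (hXS : X ≤ S) (hS : S ≤ 9 / 20)
    (hXβ : X * β = 1 / 2) :
    (β - 5 / 4) ^ 2 ≤ 1000 * ((S - X) * (X - S / 2) + (S / 2 - 1 / 5) ^ 2) := by
  obtain ⟨hβ₀, hβ₂⟩ := hβ
  have hX_lower : 1 / 4 ≤ X := by
    by_contra! hX
    linarith [mul_lt_mul_of_pos_right hX hβ₀]
  have h_ratio : S - X ≤ 8 * (X - S / 2) := by linarith
  have h_sq : (S - X) ^ 2 ≤ 8 * ((S - X) * (X - S / 2)) := by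
    linarith [mul_le_mul_of_nonneg_left h_ratio (sub_nonneg.2 hXS)]
  calc
    (β - 5 / 4) ^ 2 = (5 / 2 * β) ^ 2 * (2 / 5 - X) ^ 2 := by
      rw [← mul_pow, ← show X * β * (5 / 2) = 5 / 4 by rw [hXβ]; norm_num]
      ring
    _ ≤ 5 ^ 2 * (2 / 5 - X) ^ 2 := by gcongr; linarith
    _ ≤ 1000 * ((S - X) * (X - S / 2) + (S / 2 - 1 / 5) ^ 2) := by
      linarith [sq_nonneg (S - X + 2 * (S / 2 - 1 / 5)), sq_nonneg (S / 2 - 1 / 5),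
        sq_nonneg (S - X)]

lemma sq_sub_le_gap_of_mul_eq_fourth (hβ : β ∈ Icc 1 2) (hSX : S / 2 ≤ X) (hS : 7 / 20 ≤ S)
    (hXβ : X * β = 1 / 4) :
    (β - 5 / 4) ^ 2 ≤ 1000 * ((S - X) * (X - S / 2) + (S / 2 - 1 / 5) ^ 2) := by
  obtain ⟨hβ₁, hβ₂⟩ := hβ
  have hX_upper : X ≤ 1 / 4 := by nlinarith
  have h_ratio : X - S / 2 ≤ S - X := by linarith
  have h_sq : (X - S / 2) ^ 2 ≤ (S - X) * (X - S / 2) := by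
    linarith [mul_le_mul_of_nonneg_right h_ratio (sub_nonneg.2 hSX)]
  calc
    (β - 5 / 4) ^ 2 = (5 * β) ^ 2 * (1 / 5 - X) ^ 2 := by
      rw [← mul_pow, ← show X * β * 5 = 5 / 4 by rw [hXβ]; norm_num]
      ring
    _ ≤ 10 ^ 2 * (1 / 5 - X) ^ 2 := by gcongr; linarith
    _ ≤ 1000 * ((S - X) * (X - S / 2) + (S / 2 - 1 / 5) ^ 2) := by
      linarith [sq_nonneg (X - S / 2 - (S / 2 - 1 / 5)), sq_nonneg (S / 2 - 1 / 5),
        sq_nonneg (X - S / 2)]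

lemma sq_sub_le_gap {n : ℤ} (hβ : β ∈ Icc 1 2) (hX : X ∈ Icc (S / 2) S) (hn : X * β = 2 ^ n) :
    (β - 5 / 4) ^ 2 ≤ 1000 * ((S - X) * (X - S / 2) + (S / 2 - 1 / 5) ^ 2) := by
  obtain ⟨hβ₁, hβ₂⟩ := hβ
  rcases le_or_gt (1 / 40) |S / 2 - 1 / 5| with h_far | h_near
  · have h_sq : (1 / 40) ^ 2 ≤ (S / 2 - 1 / 5) ^ 2 := by
      rw [← sq_abs (S / 2 - 1 / 5)]
      gcongr
    have h_gap : 0 ≤ (S - X) * (X - S / 2) := mul_nonneg (sub_nonneg.2 hX.2) (sub_nonneg.2 hX.1)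
    nlinarith
  obtain ⟨hS₁, hS₂⟩ := abs_lt.1 h_near
  have hn_lower : (2 : ℝ) ^ (-3 : ℤ) < 2 ^ n := by
    rw [← hn]
    norm_num
    nlinarith [hX.1]
  have hn_upper : (2 : ℝ) ^ n < 2 ^ (0 : ℤ) := by
    rw [← hn]
    norm_num
    nlinarith [hX.1, hX.2]
  rw [zpow_lt_zpow_iff_right₀ one_lt_two] at hn_lower hn_upper
  obtain rfl | rfl : n = -1 ∨ n = -2 := by omega
  · exact sq_sub_le_gap_of_mul_eq_half ⟨by linarith, hβ₂⟩ hX.2 (by linarith)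
      (hn.trans (by norm_num))
  · exact sq_sub_le_gap_of_mul_eq_fourth ⟨hβ₁, hβ₂⟩ hX.1 (by linarith)
      (hn.trans (by norm_num))

end Gap

lemma memC.neg_logb_add_sq_le_supP {β : ℝ} {c : ℕ → ℝ} {b : ℕ} (h : memC β c b)
    (hβ : β ∈ Icc 1 2) :
    -logb 2 (5 / 4) + 1 / 30000 * (β - 5 / 4) ^ 2 ≤ supP β b c := by
  have hβ₀ : 0 < β := one_pos.trans_le hβ.1
  have hW_le : 1 / (β * 2 ^ b) ≤ ∑' i, c i := by
    rw [← h.2.1]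
    exact (summable_div_two_pow h.summable h.nonneg).tsum_le_tsum
      (fun i => div_two_pow_le (h.nonneg i) i) h.summable
  obtain ⟨k, hk⟩ := exists_two_pow_mul_mem_Icc (by positivity) hW_le
  have h_zpow : 2 ^ k * (1 / (β * 2 ^ b)) * β = 2 ^ ((k : ℤ) - b) := by
    rw [zpow_sub₀ two_ne_zero, zpow_natCast, zpow_natCast]
    field_simp
  linarith [h.gap_le_supP hβ₀ hk, sq_sub_le_gap hβ hk h_zpow]

theorem G_gt_away_from_five_fourths_general {β : ℝ} (hβ : β ∈ Icc 1 2) :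
    -logb 2 (5 / 4) + 1 / 30000 * (β - 5 / 4) ^ 2 ≤ Gfun β := by
  refine le_csInf ⟨_, _, _, memC_single hβ.1, rfl⟩ ?_
  rintro _ ⟨c, b, h, rfl⟩
  exact h.neg_logb_add_sq_le_supP hβ

/-- For every fixed `ε > 0` there is `C₀ > 0` with
`G(β) ≥ −log₂(5/4) + C₀·|β − 5/4|^{2+ε}` for all `β ∈ [1,2)`; in particular
`G(β) > −log₂(5/4)` whenever `β ≠ 5/4`. -/
theorem G_gt_away_from_five_fourths :
    (∀ ε > (0 : ℝ), ∃ C₀ > (0 : ℝ), ∀ β ∈ Set.Ico (1 : ℝ) 2,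
      -(Real.logb 2 (5 / 4)) + C₀ * |β - 5 / 4| ^ ((2 : ℝ) + ε) ≤ Gfun β) ∧
    (∀ β ∈ Set.Ico (1 : ℝ) 2, β ≠ 5 / 4 → -(Real.logb 2 (5 / 4)) < Gfun β) := by
  refine ⟨fun ε hε => ⟨1 / 30000, by norm_num, fun β hβ => ?_⟩, fun β hβ hne => ?_⟩
  · have h_abs : |β - 5 / 4| ≤ 1 := abs_le.2 ⟨by linarith [hβ.1], by linarith [hβ.2]⟩
    have h_rpow := abs_rpow_le_sq h_abs (show 2 ≤ 2 + ε by linarith)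
    linarith [G_gt_away_from_five_fourths_general (Ico_subset_Icc_self hβ)]
  · linarith [G_gt_away_from_five_fourths_general (Ico_subset_Icc_self hβ),
      sq_pos_of_ne_zero (sub_ne_zero.2 hne)]
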